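/- Let n ≥ 1, 0 < p ≤ 1, and let f be a smooth nonnegative function on ℝⁿ × (0,1] satisfying ∂ₜ f ≤ Δ f pointwise, such that ‖f‖_{Lᵖ(B(0,r)×[0,1])} ≤ e^{C r} for all r > 0 and some constant C > 0. Then there exist constants C' > 0 and a > 0, with a depending only on n and p, such that f(x,t) ≤ e^{C'(|x|+1)} / tᵃ for all (x,t) ∈ ℝⁿ × (0,1]. -/

import Mathlib

open MeasureTheory Filter Set Metric

/-- The Euclidean Laplacian of `g : ℝⁿ → ℝ`. -/
noncomputable def heatLap {n : ℕ} (g : EuclideanSpace ℝ (Fin n) → ℝ)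
    (x : EuclideanSpace ℝ (Fin n)) : ℝ :=
  ∑ i : Fin n, fderiv ℝ (fun y => fderiv ℝ g y (EuclideanSpace.single i (1 : ℝ))) x
    (EuclideanSpace.single i (1 : ℝ))

/-- A smooth cutoff on the line, equal to `1` on `(-∞, 1/2]` and to `0` on `[1, ∞)`. -/
noncomputable def lineCutoff (q : ℝ) : ℝ := Real.smoothTransition (2 - 2 * q)

/-- The (unnormalised) Gaussian heat kernel in dimension `n` at time `τ`, as a function of the
squared distance `q`. -/
noncomputable def gaussKernel (n : ℕ) (τ q : ℝ) : ℝ :=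
  Real.exp (-(n / 2 : ℝ) * Real.log τ - q / (4 * τ))

lemma lineCutoff_contDiff : ContDiff ℝ (⊤ : ℕ∞) lineCutoff :=
  Real.smoothTransition.contDiff.comp (by fun_prop)

lemma lineCutoff_nonneg (q : ℝ) : 0 ≤ lineCutoff q := Real.smoothTransition.nonneg _

lemma lineCutoff_le_one (q : ℝ) : lineCutoff q ≤ 1 := Real.smoothTransition.le_one _

lemma lineCutoff_of_one_le {q : ℝ} (h : 1 ≤ q) : lineCutoff q = 0 :=
  Real.smoothTransition.zero_of_nonpos (by linarith)

lemma lineCutoff_of_le_half {q : ℝ} (h : q ≤ 1 / 2) : lineCutoff q = 1 :=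
  Real.smoothTransition.one_of_one_le (by linarith)

lemma lineCutoff_deriv_contDiff : ContDiff ℝ (⊤ : ℕ∞) (deriv lineCutoff) :=
  ContDiff.iterate_deriv 1 lineCutoff_contDiff

lemma lineCutoff_hasDerivAt (q : ℝ) : HasDerivAt lineCutoff (deriv lineCutoff q) q :=
  (lineCutoff_contDiff.differentiable (by simp) q).hasDerivAt

lemma lineCutoff_deriv_hasDerivAt (q : ℝ) :
    HasDerivAt (deriv lineCutoff) (deriv (deriv lineCutoff) q) q :=
  (lineCutoff_deriv_contDiff.differentiable (by simp) q).hasDerivAt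

lemma lineCutoff_deriv_of_lt_half {q : ℝ} (h : q < 1 / 2) : deriv lineCutoff q = 0 := by
  have : lineCutoff =ᶠ[nhds q] fun _ => 1 := by
    filter_upwards [Iio_mem_nhds h] with z hz using lineCutoff_of_le_half hz.le
  rw [this.deriv_eq]; simp

lemma lineCutoff_deriv_deriv_of_lt_half {q : ℝ} (h : q < 1 / 2) :
    deriv (deriv lineCutoff) q = 0 := by
  have : deriv lineCutoff =ᶠ[nhds q] fun _ => 0 := by
    filter_upwards [Iio_mem_nhds h] with z hz using lineCutoff_deriv_of_lt_half hz
  rw [this.deriv_eq]; simp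

lemma exists_lineCutoff_deriv_bound : ∃ M : ℝ, 0 < M ∧ ∀ q ∈ Icc (0 : ℝ) 1,
    |deriv lineCutoff q| ≤ M ∧ |deriv (deriv lineCutoff) q| ≤ M := by
  have h2 : Continuous (deriv (deriv lineCutoff)) :=
    (ContDiff.iterate_deriv 1 lineCutoff_deriv_contDiff).continuous
  obtain ⟨A, hA⟩ := isCompact_Icc.exists_bound_of_continuousOn (s := Icc (0 : ℝ) 1)
    lineCutoff_deriv_contDiff.continuous.continuousOn
  obtain ⟨B, hB⟩ := isCompact_Icc.exists_bound_of_continuousOn (s := Icc (0 : ℝ) 1)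
    h2.continuousOn
  refine ⟨max 1 (max A B), by positivity, fun q hq => ⟨?_, ?_⟩⟩
  · exact (hA q hq).trans ((le_max_left _ _).trans (le_max_right _ _))
  · exact (hB q hq).trans ((le_max_right _ _).trans (le_max_right _ _))

lemma gaussKernel_pos (n : ℕ) (τ q : ℝ) : 0 < gaussKernel n τ q := Real.exp_pos _

lemma gaussKernel_hasDerivAt_sq (n : ℕ) (τ q : ℝ) :
    HasDerivAt (gaussKernel n τ) (-(1 / (4 * τ)) * gaussKernel n τ q) q := by
  have h : HasDerivAt (fun q : ℝ => -(n / 2 : ℝ) * Real.log τ - q / (4 * τ))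
      (-(1 / (4 * τ))) q := by
    simpa using ((hasDerivAt_id q).div_const (4 * τ)).const_sub (-(n / 2 : ℝ) * Real.log τ)
  exact HasDerivAt.congr_deriv (f := gaussKernel n τ) h.exp (by simp only [gaussKernel]; ring)

lemma gaussKernel_hasDerivAt_time (n : ℕ) {τ : ℝ} (hτ : 0 < τ) (q : ℝ) :
    HasDerivAt (fun τ => gaussKernel n τ q)
      ((-(n / (2 * τ)) + q / (4 * τ ^ 2)) * gaussKernel n τ q) τ := by
  have h1 := (Real.hasDerivAt_log hτ.ne').const_mul (-(n / 2 : ℝ))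
  have h2 : HasDerivAt (fun τ : ℝ => q / (4 * τ)) (-(q / (4 * τ ^ 2))) τ := by
    have h3 := ((hasDerivAt_id' τ).const_mul (4 : ℝ))
    exact ((hasDerivAt_const τ q).div h3 (by positivity)).congr_deriv (by field_simp; norm_num)
  refine HasDerivAt.congr_deriv (f := fun τ => gaussKernel n τ q) (h1.sub h2).exp ?_
  simp only [gaussKernel, Pi.sub_apply]; field_simp; ring

lemma exp_neg_mul_pow_le (m : ℕ) {z : ℝ} (hz : 0 ≤ z) :
    Real.exp (-z) * z ^ m ≤ m.factorial := by
  have h := Real.pow_div_factorial_le_exp z hz m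
  rw [div_le_iff₀ (by positivity)] at h
  calc Real.exp (-z) * z ^ m ≤ Real.exp (-z) * (Real.exp z * m.factorial) := by gcongr
    _ = m.factorial := by rw [← mul_assoc, ← Real.exp_add]; simp

lemma gaussKernel_le_inv_pow (n : ℕ) {τ q : ℝ} (hτ : 0 < τ) (hτ1 : τ ≤ 1) :
    gaussKernel n τ q ≤ (τ ^ n)⁻¹ * Real.exp (-(q / (4 * τ))) := by
  have hl : Real.log τ ≤ 0 := Real.log_nonpos hτ.le hτ1
  have : (τ ^ n)⁻¹ = Real.exp (-(n : ℝ) * Real.log τ) := by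
    rw [neg_mul, Real.exp_neg, mul_comm, Real.exp_mul, Real.exp_log hτ, Real.rpow_natCast]
  rw [this, ← Real.exp_add, gaussKernel]
  apply Real.exp_le_exp.2
  have := mul_nonneg (Nat.cast_nonneg (α := ℝ) n) (neg_nonneg.2 hl)
  linarith

lemma gaussKernel_mul_le (n m : ℕ) {τ q r : ℝ} (hr : 0 < r) (hτ : 0 < τ) (hτ1 : τ ≤ 1)
    (hq : r ^ 2 / 2 ≤ q) :
    gaussKernel n τ q * (τ ^ m)⁻¹ ≤ 8 ^ (n + m) * (n + m).factorial * (r ^ (2 * (n + m)))⁻¹ := by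
  have h1 := gaussKernel_le_inv_pow n (q := q) hτ hτ1
  have h2 : Real.exp (-(q / (4 * τ))) ≤ Real.exp (-(r ^ 2 / (8 * τ))) := by
    apply Real.exp_le_exp.2
    rw [neg_le_neg_iff, div_le_div_iff₀ (by positivity) (by positivity)]
    nlinarith
  have h3 := exp_neg_mul_pow_le (n + m) (z := r ^ 2 / (8 * τ)) (by positivity)
  calc gaussKernel n τ q * (τ ^ m)⁻¹
      ≤ ((τ ^ n)⁻¹ * Real.exp (-(r ^ 2 / (8 * τ)))) * (τ ^ m)⁻¹ := by
        gcongr; exact h1.trans (by gcongr)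
    _ = 8 ^ (n + m) * (Real.exp (-(r ^ 2 / (8 * τ))) * (r ^ 2 / (8 * τ)) ^ (n + m)) *
          (r ^ (2 * (n + m)))⁻¹ := by
        rw [div_pow, mul_pow, pow_mul, pow_add τ]; field_simp
    _ ≤ _ := by gcongr

lemma gaussKernel_le_of_half_sq_le (n : ℕ) {τ q r : ℝ} (hr : 0 < r) (hτ1 : τ ≤ 1)
    (hτ : r ^ 2 / 2 ≤ τ) (hq : 0 ≤ q) : gaussKernel n τ q ≤ 2 ^ n * (r ^ (2 * n))⁻¹ := by
  have hτ0 : 0 < τ := lt_of_lt_of_le (by positivity) hτ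
  calc gaussKernel n τ q ≤ (τ ^ n)⁻¹ * Real.exp (-(q / (4 * τ))) :=
        gaussKernel_le_inv_pow n hτ0 hτ1
    _ ≤ ((r ^ 2 / 2) ^ n)⁻¹ * 1 := by
        gcongr
        rw [Real.exp_le_one_iff]; simp; positivity
    _ = _ := by rw [div_pow, pow_mul]; field_simp

/-- The cut-off Gaussian kernel, as a function of time and the squared distance. -/
noncomputable def cutGauss (n : ℕ) (r τ q : ℝ) : ℝ := lineCutoff (q / r ^ 2) * gaussKernel n τ q

/-- First derivative of `cutGauss` in the squared distance. -/
noncomputable def cutGaussD (n : ℕ) (r τ q : ℝ) : ℝ :=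
  (deriv lineCutoff (q / r ^ 2) / r ^ 2 - lineCutoff (q / r ^ 2) / (4 * τ)) * gaussKernel n τ q

/-- Second derivative of `cutGauss` in the squared distance. -/
noncomputable def cutGaussDD (n : ℕ) (r τ q : ℝ) : ℝ :=
  (deriv (deriv lineCutoff) (q / r ^ 2) / r ^ 4 - deriv lineCutoff (q / r ^ 2) / (2 * τ * r ^ 2) +
    lineCutoff (q / r ^ 2) / (16 * τ ^ 2)) * gaussKernel n τ q

/-- Time derivative of `cutGauss`. -/
noncomputable def cutGaussT (n : ℕ) (r τ q : ℝ) : ℝ :=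
  lineCutoff (q / r ^ 2) * ((-(n / (2 * τ)) + q / (4 * τ ^ 2)) * gaussKernel n τ q)

lemma cutGauss_nonneg (n : ℕ) (r τ q : ℝ) : 0 ≤ cutGauss n r τ q :=
  mul_nonneg (lineCutoff_nonneg _) (gaussKernel_pos _ _ _).le

lemma cutGauss_le (n : ℕ) (r τ q : ℝ) : cutGauss n r τ q ≤ gaussKernel n τ q :=
  mul_le_of_le_one_left (gaussKernel_pos _ _ _).le (lineCutoff_le_one _)

lemma cutGauss_hasDerivAt_time (n : ℕ) (r : ℝ) {τ : ℝ} (hτ : 0 < τ) (q : ℝ) :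
    HasDerivAt (fun τ => cutGauss n r τ q) (cutGaussT n r τ q) τ :=
  (gaussKernel_hasDerivAt_time n hτ q).const_mul _

lemma cutGauss_hasDerivAt (n : ℕ) {r τ : ℝ} (hr : 0 < r) (hτ : 0 < τ) (q : ℝ) :
    HasDerivAt (cutGauss n r τ) (cutGaussD n r τ q) q := by
  have h0 : HasDerivAt (fun q : ℝ => q / r ^ 2) (1 / r ^ 2) q := (hasDerivAt_id q).div_const _
  have h1 := (lineCutoff_hasDerivAt (q / r ^ 2)).comp q h0
  refine HasDerivAt.congr_deriv (f := cutGauss n r τ) (h1.mul (gaussKernel_hasDerivAt_sq n τ q)) ?_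
  simp only [cutGaussD, Function.comp]; field_simp; ring

lemma cutGaussD_hasDerivAt (n : ℕ) {r τ : ℝ} (hr : 0 < r) (hτ : 0 < τ) (q : ℝ) :
    HasDerivAt (cutGaussD n r τ) (cutGaussDD n r τ q) q := by
  have h0 : HasDerivAt (fun q : ℝ => q / r ^ 2) (1 / r ^ 2) q := (hasDerivAt_id q).div_const _
  have h1 := (lineCutoff_hasDerivAt (q / r ^ 2)).comp q h0
  have h2 := (lineCutoff_deriv_hasDerivAt (q / r ^ 2)).comp q h0
  refine HasDerivAt.congr_deriv (f := cutGaussD n r τ)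
    (((h2.div_const (r ^ 2)).sub (h1.div_const (4 * τ))).mul (gaussKernel_hasDerivAt_sq n τ q)) ?_
  simp only [cutGaussDD, Function.comp, Pi.sub_apply]; field_simp; ring

/-- The error produced by the cutoff when the cut-off Gaussian is inserted in the backward heat
operator stays bounded, uniformly as `τ → 0`. -/
lemma cutGauss_heat_defect_le (n : ℕ) {M r τ q : ℝ} (hM : 0 < M)
    (hMb : ∀ q ∈ Icc (0 : ℝ) 1,
      |deriv lineCutoff q| ≤ M ∧ |deriv (deriv lineCutoff) q| ≤ M)
    (hr : 0 < r) (hτ : 0 < τ) (hτ1 : τ ≤ 1) (hq : 0 ≤ q) (hqr : q ≤ r ^ 2) :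
    2 * n * cutGaussD n r τ q + 4 * q * cutGaussDD n r τ q - cutGaussT n r τ q ≤
      M * ((2 * n + 4) * (8 ^ n * n.factorial) + 2 * (8 ^ (n + 1) * (n + 1).factorial)) *
        (r ^ (2 * (n + 1)))⁻¹ := by
  have hid : 2 * n * cutGaussD n r τ q + 4 * q * cutGaussDD n r τ q - cutGaussT n r τ q =
      (2 * n * deriv lineCutoff (q / r ^ 2) / r ^ 2 +
        4 * (q / r ^ 2) * deriv (deriv lineCutoff) (q / r ^ 2) / r ^ 2 -
        2 * (q / r ^ 2) * deriv lineCutoff (q / r ^ 2) / τ) * gaussKernel n τ q := by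
    simp only [cutGaussD, cutGaussDD, cutGaussT]; field_simp; ring
  rw [hid]
  rcases lt_or_ge (q / r ^ 2) (1 / 2) with h | h
  · rw [lineCutoff_deriv_of_lt_half h, lineCutoff_deriv_deriv_of_lt_half h]
    simp only [mul_zero, zero_div, sub_zero, add_zero, zero_mul]; positivity
  · have hz1 : q / r ^ 2 ≤ 1 := by rw [div_le_one (by positivity)]; exact hqr
    have hz0 : 0 ≤ q / r ^ 2 := div_nonneg hq (by positivity)
    have hq2 : r ^ 2 / 2 ≤ q := by
      rw [le_div_iff₀ (by positivity)] at h; linarith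
    obtain ⟨b1, b2⟩ := hMb _ ⟨hz0, hz1⟩
    have b3 := neg_le_of_abs_le b1
    have b1 := le_of_abs_le b1
    have b2 := le_of_abs_le b2
    set z := q / r ^ 2
    set d := deriv lineCutoff z
    set e := deriv (deriv lineCutoff) z
    have c1 : 2 * n * d / r ^ 2 ≤ 2 * n * M / r ^ 2 := by gcongr
    have c2 : 4 * z * e / r ^ 2 ≤ 4 * M / r ^ 2 := by
      rw [mul_assoc]; gcongr 4 * ?_ / _
      nlinarith
    have c3 : - (2 * z * d / τ) ≤ 2 * M / τ := by
      rw [← neg_div]; gcongr; nlinarith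
    have k0 := gaussKernel_mul_le n 0 hr hτ hτ1 hq2
    have k1 := gaussKernel_mul_le n 1 hr hτ hτ1 hq2
    simp only [pow_zero, inv_one, mul_one, add_zero, pow_one] at k0 k1
    have g := gaussKernel_pos n τ q
    calc _ ≤ (2 * n * M / r ^ 2 + 4 * M / r ^ 2 + 2 * M / τ) * gaussKernel n τ q := by
          gcongr; linarith
      _ = M * ((2 * n + 4) * (r ^ 2)⁻¹ * gaussKernel n τ q + 2 * (gaussKernel n τ q * τ⁻¹)) := by
          field_simp
      _ ≤ M * ((2 * n + 4) * (r ^ 2)⁻¹ * (8 ^ n * n.factorial * (r ^ (2 * n))⁻¹) +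
            2 * (8 ^ (n + 1) * (n + 1).factorial * (r ^ (2 * (n + 1)))⁻¹)) := by gcongr
      _ = _ := by rw [mul_add 2 n 1, pow_add]; field_simp; ring

lemma hasFDerivAt_radial {n : ℕ} {w w' : ℝ → ℝ} (hw : ∀ q, HasDerivAt w (w' q) q)
    (x₀ y : EuclideanSpace ℝ (Fin n)) :
    HasFDerivAt (fun y => w (‖y - x₀‖ ^ 2)) (w' (‖y - x₀‖ ^ 2) • (2 • innerSL ℝ (y - x₀))) y := by
  have h : HasFDerivAt (fun y => ‖y - x₀‖ ^ 2) (2 • innerSL ℝ (y - x₀)) y := by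
    simpa using ((hasFDerivAt_id y).sub_const x₀).norm_sq
  exact (hw _).comp_hasFDerivAt y h

lemma heatLap_radial {n : ℕ} {w w' w'' : ℝ → ℝ} (hw : ∀ q, HasDerivAt w (w' q) q)
    (hw' : ∀ q, HasDerivAt w' (w'' q) q) (x₀ y : EuclideanSpace ℝ (Fin n)) :
    heatLap (fun y => w (‖y - x₀‖ ^ 2)) y =
      2 * n * w' (‖y - x₀‖ ^ 2) + 4 * ‖y - x₀‖ ^ 2 * w'' (‖y - x₀‖ ^ 2) := by
  have key : ∀ i : Fin n,
      fderiv ℝ (fun y => fderiv ℝ (fun y => w (‖y - x₀‖ ^ 2)) y (EuclideanSpace.single i (1 : ℝ))) y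
        (EuclideanSpace.single i (1 : ℝ)) =
      2 * w' (‖y - x₀‖ ^ 2) + 4 * w'' (‖y - x₀‖ ^ 2) * (y - x₀) i ^ 2 := by
    intro i
    have h1 : (fun y => fderiv ℝ (fun y => w (‖y - x₀‖ ^ 2)) y
        (EuclideanSpace.single i (1 : ℝ))) = fun y => w' (‖y - x₀‖ ^ 2) * (2 * (y - x₀) i) := by
      funext z
      rw [(hasFDerivAt_radial hw x₀ z).fderiv]
      simp [EuclideanSpace.inner_single_right (𝕜 := ℝ)]
    have h2 : HasFDerivAt (fun y : EuclideanSpace ℝ (Fin n) => 2 * (y - x₀) i)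
        ((2 : ℝ) • (EuclideanSpace.proj i : EuclideanSpace ℝ (Fin n) →L[ℝ] ℝ)) y := by
      have := ((EuclideanSpace.proj i : EuclideanSpace ℝ (Fin n) →L[ℝ] ℝ).hasFDerivAt
        (x := y)).sub_const (x₀ i)
      exact this.const_mul (2 : ℝ)
    rw [h1, HasFDerivAt.fderiv (f := fun y => w' (‖y - x₀‖ ^ 2) * (2 * (y - x₀) i))
      ((hasFDerivAt_radial hw' x₀ y).mul h2)]
    simp [EuclideanSpace.inner_single_right (𝕜 := ℝ)]
    ring
  rw [heatLap, Finset.sum_congr rfl fun i _ => key i, Finset.sum_add_distrib, ← Finset.mul_sum,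
    ← Finset.mul_sum, ← EuclideanSpace.real_norm_sq_eq]
  simp; ring

lemma integral_mul_heatLap_comm {n : ℕ} {u w : EuclideanSpace ℝ (Fin n) → ℝ}
    (hu : ContDiff ℝ (⊤ : ℕ∞) u) (hw : ContDiff ℝ (⊤ : ℕ∞) w) (hc : HasCompactSupport w) :
    ∫ y, heatLap u y * w y = ∫ y, u y * heatLap w y := by
  have smooth : ∀ {g : EuclideanSpace ℝ (Fin n) → ℝ}, ContDiff ℝ (⊤ : ℕ∞) g → ∀ e,
      ContDiff ℝ (⊤ : ℕ∞) fun y => fderiv ℝ g y e := fun hg e =>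
    (hg.fderiv_right (m := (⊤ : ℕ∞)) (by simp)).clm_apply contDiff_const
  have supp : ∀ {g : EuclideanSpace ℝ (Fin n) → ℝ}, HasCompactSupport g → ∀ e,
      HasCompactSupport fun y => fderiv ℝ g y e := fun hg e => hg.fderiv_apply (𝕜 := ℝ) e
  have integ : ∀ {g h : EuclideanSpace ℝ (Fin n) → ℝ}, ContDiff ℝ (⊤ : ℕ∞) g →
      ContDiff ℝ (⊤ : ℕ∞) h → HasCompactSupport h → Integrable fun y => g y * h y :=
    fun hg hh hs => (hg.continuous.mul hh.continuous).integrable_of_hasCompactSupport hs.mul_left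
  have swap : ∀ {g h : EuclideanSpace ℝ (Fin n) → ℝ}, ContDiff ℝ (⊤ : ℕ∞) g →
      ContDiff ℝ (⊤ : ℕ∞) h → HasCompactSupport h → ∀ e,
      ∫ y, g y * fderiv ℝ h y e = -∫ y, fderiv ℝ g y e * h y := fun hg hh hs e =>
    integral_mul_fderiv_eq_neg_fderiv_mul_of_integrable (integ (smooth hg e) hh hs)
      (integ hg (smooth hh e) (supp hs e)) (integ hg hh hs)
      (fun x _ => hg.differentiable (by simp) x) (fun x _ => hh.differentiable (by simp) x)
  simp only [heatLap, Finset.sum_mul, Finset.mul_sum]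
  rw [integral_finsetSum _ fun i _ => integ (smooth (smooth hu _) _) hw hc,
    integral_finsetSum _ fun i _ => integ hu (smooth (smooth hw _) _) (supp (supp hc _) _)]
  refine Finset.sum_congr rfl fun i _ => ?_
  rw [swap hu (smooth hw _) (supp hc _), swap (smooth hu _) hw hc, neg_neg]

lemma gaussKernel_inv_sq (n : ℕ) {c : ℝ} (hc : 0 < c) (q : ℝ) :
    gaussKernel n (c ^ 2)⁻¹ q = c ^ n * Real.exp (-(1 / 4) * (c ^ 2 * q)) := by
  have : c ^ n = Real.exp (n * Real.log c) := by
    rw [mul_comm, Real.exp_mul, Real.exp_log hc, Real.rpow_natCast]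
  rw [this, ← Real.exp_add, gaussKernel, Real.log_inv, Real.log_pow]
  congr 1
  push_cast
  field_simp
  ring

lemma tendsto_integral_gaussKernel_mul {n : ℕ} {u : EuclideanSpace ℝ (Fin n) → ℝ}
    (hu : Integrable u) {x₀ : EuclideanSpace ℝ (Fin n)} (hx : ContinuousAt u x₀) :
    Tendsto (fun c : ℝ => ∫ y, gaussKernel n (c ^ 2)⁻¹ (‖y - x₀‖ ^ 2) * u y) atTop
      (nhds ((4 * Real.pi) ^ (n / 2 : ℝ) * u x₀)) := by
  set A : ℝ := (4 * Real.pi) ^ (n / 2 : ℝ)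
  have hA : 0 < A := by positivity
  let φ : EuclideanSpace ℝ (Fin n) → ℝ := fun v => A⁻¹ * Real.exp (-(1 / 4) * ‖v‖ ^ 2)
  have h : Tendsto (fun c : ℝ => ∫ y, (c ^ Module.finrank ℝ (EuclideanSpace ℝ (Fin n)) *
      φ (c • (x₀ - y))) • u y) atTop (nhds (u x₀)) := by
    apply tendsto_integral_comp_smul_smul_of_integrable'
    · exact fun x => by positivity
    · rw [integral_const_mul, GaussianFourier.integral_rexp_neg_mul_sq_norm (by positivity)]
      simp only [finrank_euclideanSpace, Fintype.card_fin, A]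
      rw [show Real.pi / (1 / 4) = 4 * Real.pi by ring]
      exact inv_mul_cancel₀ hA.ne'
    · have h1 : Tendsto (fun v : EuclideanSpace ℝ (Fin n) => ‖v‖ ^ 2) (Bornology.cobounded _) atTop :=
        (tendsto_pow_atTop two_ne_zero).comp tendsto_norm_cobounded_atTop
      have h2 := ((tendsto_rpow_mul_exp_neg_mul_atTop_nhds_zero (n / 2 : ℝ) (1 / 4)
        (by norm_num)).comp h1).const_mul A⁻¹
      rw [mul_zero] at h2
      refine h2.congr fun v => ?_
      simp only [Function.comp_apply, φ, finrank_euclideanSpace, Fintype.card_fin]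
      rw [← Real.rpow_natCast_mul (norm_nonneg v),
        show ((2 : ℕ) : ℝ) * (n / 2 : ℝ) = n by push_cast; ring, Real.rpow_natCast]
      ring
    · exact hu
    · exact hx
  refine ((h.const_mul A).congr' ?_)
  filter_upwards [eventually_gt_atTop 0] with c hc
  rw [← integral_const_mul]
  congr 1 with y
  rw [gaussKernel_inv_sq n hc, finrank_euclideanSpace, Fintype.card_fin, smul_eq_mul]
  simp only [φ]
  rw [norm_smul, Real.norm_of_nonneg hc.le, norm_sub_rev, mul_pow]
  field_simp

lemma heatLap_continuous {n : ℕ} {g : EuclideanSpace ℝ (Fin n) → ℝ}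
    (hg : ContDiff ℝ (⊤ : ℕ∞) g) : Continuous (heatLap g) := by
  have h1 : ∀ e, ContDiff ℝ (⊤ : ℕ∞) fun y => fderiv ℝ g y e := fun e =>
    (hg.fderiv_right (m := (⊤ : ℕ∞)) (by simp)).clm_apply contDiff_const
  refine continuous_finsetSum _ fun i _ => ?_
  exact (((h1 _).fderiv_right (m := (⊤ : ℕ∞)) (by simp)).clm_apply contDiff_const).continuous

lemma cutGauss_radial_contDiff (n : ℕ) (r τ : ℝ) (x₀ : EuclideanSpace ℝ (Fin n)) :
    ContDiff ℝ (⊤ : ℕ∞) fun y => cutGauss n r τ (‖y - x₀‖ ^ 2) := by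
  have hq : ContDiff ℝ (⊤ : ℕ∞) fun y : EuclideanSpace ℝ (Fin n) => ‖y - x₀‖ ^ 2 :=
    (contDiff_id.sub contDiff_const).norm_sq ℝ
  exact (lineCutoff_contDiff.comp (hq.div_const _)).mul
    (contDiff_const.sub (hq.div_const _)).exp

lemma cutGauss_radial_eq_zero (n : ℕ) {r : ℝ} (hr : 0 < r) (τ : ℝ)
    {x₀ y : EuclideanSpace ℝ (Fin n)} (hy : y ∉ closedBall x₀ r) :
    cutGauss n r τ (‖y - x₀‖ ^ 2) = 0 := by
  rw [mem_closedBall, dist_eq_norm, not_le] at hy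
  rw [cutGauss, lineCutoff_of_one_le, zero_mul]
  rw [le_div_iff₀ (by positivity), one_mul]
  gcongr

lemma setIntegral_cutGauss_green {n : ℕ} {u : EuclideanSpace ℝ (Fin n) → ℝ}
    (hu : ContDiff ℝ (⊤ : ℕ∞) u) {r τ : ℝ} (hr : 0 < r) (x₀ : EuclideanSpace ℝ (Fin n)) :
    ∫ y in closedBall x₀ r, (heatLap u y * cutGauss n r τ (‖y - x₀‖ ^ 2) -
      u y * heatLap (fun y => cutGauss n r τ (‖y - x₀‖ ^ 2)) y) = 0 := by
  set w : EuclideanSpace ℝ (Fin n) → ℝ := fun y => cutGauss n r τ (‖y - x₀‖ ^ 2)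
  have hw : ContDiff ℝ (⊤ : ℕ∞) w := cutGauss_radial_contDiff n r τ x₀
  have hzero : ∀ y ∉ closedBall x₀ r, w y = 0 := fun y hy => cutGauss_radial_eq_zero n hr τ hy
  have hc : HasCompactSupport w := HasCompactSupport.intro (isCompact_closedBall x₀ r) hzero
  have hlap : ∀ y ∉ closedBall x₀ r, heatLap w y = 0 := by
    intro y hy
    have hev : w =ᶠ[nhds y] fun _ => 0 := by
      filter_upwards [isClosed_closedBall.isOpen_compl.mem_nhds hy] with z hz using hzero z hz
    refine Finset.sum_eq_zero fun i _ => ?_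
    have h2 : (fun z => fderiv ℝ w z (EuclideanSpace.single i (1 : ℝ))) =ᶠ[nhds y] fun _ => 0 := by
      filter_upwards [hev.fderiv (𝕜 := ℝ)] with z hz
      rw [hz]; simp
    rw [h2.fderiv_eq]; simp
  have i1 : Integrable fun y => heatLap u y * w y :=
    ((heatLap_continuous hu).mul hw.continuous).integrable_of_hasCompactSupport hc.mul_left
  have i2 : Integrable fun y => u y * heatLap w y :=
    (hu.continuous.mul (heatLap_continuous hw)).integrable_of_hasCompactSupport
      (HasCompactSupport.intro (isCompact_closedBall x₀ r) hlap).mul_left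
  rw [setIntegral_eq_integral_of_forall_compl_eq_zero, integral_sub i1 i2,
    integral_mul_heatLap_comm hu hw hc, sub_self]
  intro y hy
  change heatLap u y * w y - u y * heatLap w y = 0
  rw [hzero y hy, hlap y hy]; simp

/-- Testing a nonnegative heat subsolution against the backward cut-off Gaussian with pole at time
`t₀ + ε`: the weighted value at time `t₀` is controlled by the `L¹` norm over a cylinder, with a
constant that does not depend on `ε`. -/
lemma setIntegral_cutGauss_mul_le {n : ℕ} {M : ℝ} (hM : 0 < M)
    (hMb : ∀ q ∈ Icc (0 : ℝ) 1,
      |deriv lineCutoff q| ≤ M ∧ |deriv (deriv lineCutoff) q| ≤ M)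
    {f : ℝ → EuclideanSpace ℝ (Fin n) → ℝ}
    (hf : ContDiffOn ℝ (⊤ : ℕ∞) (fun q : ℝ × EuclideanSpace ℝ (Fin n) => f q.1 q.2)
      (Ioo (0 : ℝ) 1 ×ˢ univ))
    (hf0 : ∀ t ∈ Ioo (0 : ℝ) 1, ∀ x, 0 ≤ f t x)
    (hsub : ∀ t ∈ Ioo (0 : ℝ) 1, ∀ x, deriv (fun s => f s x) t ≤ heatLap (f t) x)
    {t₀ r ε : ℝ} (x₀ : EuclideanSpace ℝ (Fin n)) (hr : 0 < r) (hr2 : r ≤ 1 / 2)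
    (hrt : r ^ 2 < t₀) (ht : t₀ < 1) (hε : 0 < ε) (hε2 : ε ≤ 1 / 2) :
    ∫ y in closedBall x₀ r, cutGauss n r ε (‖y - x₀‖ ^ 2) * f t₀ y ≤
      (M * 2 ^ n + M * ((2 * n + 4) * (8 ^ n * n.factorial) +
        2 * (8 ^ (n + 1) * (n + 1).factorial))) * (r ^ (2 * (n + 1)))⁻¹ *
      ∫ z in Icc (t₀ - r ^ 2) t₀ ×ˢ closedBall x₀ r, f z.1 z.2 := by
  set D : ℝ := (2 * n + 4) * (8 ^ n * n.factorial) + 2 * (8 ^ (n + 1) * (n + 1).factorial)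
  set B : ℝ := (M * 2 ^ n + M * D) * (r ^ (2 * (n + 1)))⁻¹ with hB
  set J := Icc (t₀ - r ^ 2) t₀
  set P := closedBall x₀ r
  have hD : 0 ≤ D := by positivity
  have hr4 : r ^ 2 ≤ 1 / 4 := by nlinarith
  have hJ : ∀ s ∈ J, s ∈ Ioo (0 : ℝ) 1 := fun s hs =>
    ⟨by linarith [hs.1], by linarith [hs.2]⟩
  have hτ : ∀ s ∈ J, 0 < t₀ + ε - s ∧ t₀ + ε - s ≤ 1 := fun s hs =>
    ⟨by linarith [hs.2], by linarith [hs.1]⟩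
  have hPc : IsCompact P := isCompact_closedBall x₀ r
  have hU : IsOpen (Ioo (0 : ℝ) 1 ×ˢ (univ : Set (EuclideanSpace ℝ (Fin n)))) :=
    isOpen_Ioo.prod isOpen_univ
  have hsubU : J ×ˢ P ⊆ Ioo (0 : ℝ) 1 ×ˢ univ := fun z hz => ⟨hJ _ hz.1, trivial⟩
  set F : ℝ × EuclideanSpace ℝ (Fin n) → ℝ := fun q => f q.1 q.2
  have hFd : ∀ s ∈ J, ∀ y, HasDerivAt (fun s => f s y) (fderiv ℝ F (s, y) (1, 0)) s := by
    intro s hs y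
    have h1 : HasFDerivAt F (fderiv ℝ F (s, y)) (s, y) :=
      ((hf.contDiffAt (hU.mem_nhds ⟨hJ s hs, trivial⟩)).differentiableAt (by simp)).hasFDerivAt
    exact h1.comp_hasDerivAt s ((hasDerivAt_id s).prodMk (hasDerivAt_const s y))
  have hslice : ∀ s ∈ J, ContDiff ℝ (⊤ : ℕ∞) (f s) := by
    intro s hs
    rw [← contDiffOn_univ]
    exact hf.comp (g := F) (f := fun y => (s, y)) (by fun_prop) fun y _ => ⟨hJ s hs, trivial⟩
  let χ : ℝ → ℝ := fun s => lineCutoff ((t₀ - s) / r ^ 2)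
  let χ' : ℝ → ℝ := fun s => -(deriv lineCutoff ((t₀ - s) / r ^ 2) / r ^ 2)
  let V : ℝ → EuclideanSpace ℝ (Fin n) → ℝ := fun s y =>
    χ s * (f s y * cutGauss n r (t₀ + ε - s) (‖y - x₀‖ ^ 2))
  let V' : ℝ → EuclideanSpace ℝ (Fin n) → ℝ := fun s y =>
    χ' s * (f s y * cutGauss n r (t₀ + ε - s) (‖y - x₀‖ ^ 2)) +
      χ s * (fderiv ℝ F (s, y) (1, 0) * cutGauss n r (t₀ + ε - s) (‖y - x₀‖ ^ 2) -
        f s y * cutGaussT n r (t₀ + ε - s) (‖y - x₀‖ ^ 2))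
  have hV : ∀ s ∈ J, ∀ y, HasDerivAt (fun s => V s y) (V' s y) s := by
    intro s hs y
    have h1 : HasDerivAt χ (χ' s) s := by
      have h0 : HasDerivAt (fun s => (t₀ - s) / r ^ 2) (-1 / r ^ 2) s :=
        ((hasDerivAt_id s).const_sub t₀).div_const _
      exact ((lineCutoff_hasDerivAt _).comp s h0).congr_deriv (by simp only [χ']; ring)
    have h2 : HasDerivAt (fun s => cutGauss n r (t₀ + ε - s) (‖y - x₀‖ ^ 2))
        (-cutGaussT n r (t₀ + ε - s) (‖y - x₀‖ ^ 2)) s := by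
      have h0 : HasDerivAt (fun s => t₀ + ε - s) (-1) s := (hasDerivAt_id s).const_sub _
      exact ((cutGauss_hasDerivAt_time n r (hτ s hs).1 (‖y - x₀‖ ^ 2)).comp s h0).congr_deriv
        (by ring)
    exact (h1.mul ((hFd s hs y).mul h2)).congr_deriv (by simp only [V', χ, Pi.mul_apply]; ring)
  have hV'c : ContinuousOn (Function.uncurry V') (J ×ˢ P) := by
    have c1 : ContinuousOn F (J ×ˢ P) := hf.continuousOn.mono hsubU
    have c2 : ContinuousOn (fun z => fderiv ℝ F z (1, 0)) (J ×ˢ P) :=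
      ((hf.continuousOn_fderiv_of_isOpen hU (by simp)).clm_apply continuousOn_const).mono hsubU
    have cl := lineCutoff_contDiff.continuous
    have cl' := lineCutoff_deriv_contDiff.continuous
    have hne : ∀ z ∈ J ×ˢ P, t₀ + ε - z.1 ≠ 0 := fun z hz => (hτ z.1 hz.1).1.ne'
    have cτ : ContinuousOn (fun z : ℝ × EuclideanSpace ℝ (Fin n) => t₀ + ε - z.1) (J ×ˢ P) := by
      fun_prop
    have cq : ContinuousOn (fun z : ℝ × EuclideanSpace ℝ (Fin n) => ‖z.2 - x₀‖ ^ 2) (J ×ˢ P) := by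
      fun_prop
    have cχ : ContinuousOn (fun z : ℝ × EuclideanSpace ℝ (Fin n) => χ z.1) (J ×ˢ P) := by
      fun_prop
    have cχ' : ContinuousOn (fun z : ℝ × EuclideanSpace ℝ (Fin n) => χ' z.1) (J ×ˢ P) := by
      fun_prop
    have cη : ContinuousOn (fun z : ℝ × EuclideanSpace ℝ (Fin n) =>
        lineCutoff (‖z.2 - x₀‖ ^ 2 / r ^ 2)) (J ×ˢ P) := by fun_prop
    have cg : ContinuousOn (fun z : ℝ × EuclideanSpace ℝ (Fin n) =>
        gaussKernel n (t₀ + ε - z.1) (‖z.2 - x₀‖ ^ 2)) (J ×ˢ P) :=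
      Real.continuous_exp.comp_continuousOn ((continuousOn_const.mul (cτ.log hne)).sub
        (cq.div (continuousOn_const.mul cτ) fun z hz => mul_ne_zero four_ne_zero (hne z hz)))
    have cT : ContinuousOn (fun z : ℝ × EuclideanSpace ℝ (Fin n) =>
        cutGaussT n r (t₀ + ε - z.1) (‖z.2 - x₀‖ ^ 2)) (J ×ˢ P) :=
      cη.mul (((continuousOn_const.div (continuousOn_const.mul cτ) fun z hz =>
        mul_ne_zero two_ne_zero (hne z hz)).neg.add (cq.div (continuousOn_const.mul (cτ.pow 2))
          fun z hz => mul_ne_zero four_ne_zero (pow_ne_zero 2 (hne z hz)))).mul cg)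
    exact (cχ'.mul (c1.mul (cη.mul cg))).add (cχ.mul ((c2.mul (cη.mul cg)).sub (c1.mul cT)))
  have hmeas : (volume.restrict J).prod (volume.restrict P) =
      (volume : Measure (ℝ × EuclideanSpace ℝ (Fin n))).restrict (J ×ˢ P) := by
    rw [Measure.prod_restrict, Measure.volume_eq_prod]
  have hV'i : Integrable (Function.uncurry V') ((volume.restrict J).prod (volume.restrict P)) := by
    rw [hmeas]
    exact hV'c.integrableOn_compact (isCompact_Icc.prod hPc)
  have hFi : Integrable F ((volume.restrict J).prod (volume.restrict P)) := by
    rw [hmeas]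
    exact (hf.continuousOn.mono hsubU).integrableOn_compact (isCompact_Icc.prod hPc)
  have hFTC : ∀ y ∈ P, ∫ s in J, V' s y = cutGauss n r ε (‖y - x₀‖ ^ 2) * f t₀ y := by
    intro y hy
    have hle : t₀ - r ^ 2 ≤ t₀ := by linarith [sq_nonneg r]
    have hcy : ContinuousOn (fun s => V' s y) J :=
      hV'c.comp (f := fun s => (s, y)) (by fun_prop) fun s hs => ⟨hs, hy⟩
    rw [integral_Icc_eq_integral_Ioc, ← intervalIntegral.integral_of_le hle,
      intervalIntegral.integral_eq_sub_of_hasDerivAt (f := fun s => V s y)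
        (fun s hs => hV s (by rwa [uIcc_of_le hle] at hs) y)
        (hcy.intervalIntegrable_of_Icc hle)]
    have e1 : χ t₀ = 1 := lineCutoff_of_le_half (by simp)
    have e0 : χ (t₀ - r ^ 2) = 0 := lineCutoff_of_one_le (by
      rw [sub_sub_cancel, div_self (by positivity)])
    simp only [V, e1, e0, add_sub_cancel_left]
    ring
  have hslab : ∀ s ∈ J, ∫ y in P, V' s y ≤ B * ∫ y in P, f s y := by
    intro s hs
    obtain ⟨hτ0, hτ1⟩ := hτ s hs
    set τ := t₀ + ε - s with hτdef
    set w : EuclideanSpace ℝ (Fin n) → ℝ := fun y => cutGauss n r τ (‖y - x₀‖ ^ 2)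
    have hu := hslice s hs
    have hw : ContDiff ℝ (⊤ : ℕ∞) w := cutGauss_radial_contDiff n r τ x₀
    have i1 : IntegrableOn (fun y => heatLap (f s) y * w y - f s y * heatLap w y) P :=
      (((heatLap_continuous hu).mul hw.continuous).sub
        (hu.continuous.mul (heatLap_continuous hw))).continuousOn.integrableOn_compact hPc
    have i2 : IntegrableOn (f s) P := hu.continuous.continuousOn.integrableOn_compact hPc
    have i3 : IntegrableOn (V' s) P :=
      ContinuousOn.integrableOn_compact hPc
        (hV'c.comp (f := fun y => (s, y)) (by fun_prop) fun y hy => ⟨hs, hy⟩)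
    have hpt : ∀ y ∈ P, V' s y ≤
        χ s * (heatLap (f s) y * w y - f s y * heatLap w y) + B * f s y := by
      intro y hy
      rw [mem_closedBall, dist_eq_norm] at hy
      have hq : ‖y - x₀‖ ^ 2 ≤ r ^ 2 := by gcongr
      have hlw : heatLap w y = _ := heatLap_radial
        (fun q => cutGauss_hasDerivAt n hr hτ0 q) (fun q => cutGaussD_hasDerivAt n hr hτ0 q) x₀ y
      have hdef := cutGauss_heat_defect_le n hM hMb hr hτ0 hτ1 (sq_nonneg ‖y - x₀‖) hq
      rw [← hlw] at hdef
      have hf_s : fderiv ℝ F (s, y) (1, 0) ≤ heatLap (f s) y := by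
        rw [← (hFd s hs y).deriv]; exact hsub s (hJ s hs) y
      have hfy := hf0 s (hJ s hs) y
      have hw0 : 0 ≤ w y := cutGauss_nonneg _ _ _ _
      have hχ0 : 0 ≤ χ s := lineCutoff_nonneg _
      have hχ1 : χ s ≤ 1 := lineCutoff_le_one _
      have hχw : χ' s * w y ≤ M * 2 ^ n * (r ^ (2 * (n + 1)))⁻¹ := by
        rcases lt_or_ge ((t₀ - s) / r ^ 2) (1 / 2) with h | h
        · simp only [χ', lineCutoff_deriv_of_lt_half h]
          simp only [zero_div, neg_zero, zero_mul]; positivity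
        · have hs1 : (t₀ - s) / r ^ 2 ≤ 1 := by
            rw [div_le_one (by positivity)]; linarith [hs.1]
          have hb := neg_le_of_abs_le (hMb _ ⟨by linarith, hs1⟩).1
          have hτr : r ^ 2 / 2 ≤ τ := by
            rw [le_div_iff₀ (by positivity)] at h; linarith
          have hg := (cutGauss_le n r τ (‖y - x₀‖ ^ 2)).trans
            (gaussKernel_le_of_half_sq_le n hr hτ1 hτr (sq_nonneg ‖y - x₀‖))
          calc χ' s * w y ≤ (M / r ^ 2) * w y := by
                refine mul_le_mul_of_nonneg_right ?_ hw0
                simp only [χ']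
                rw [← neg_div]; gcongr; linarith
            _ ≤ (M / r ^ 2) * (2 ^ n * (r ^ (2 * n))⁻¹) := by gcongr
            _ = _ := by rw [mul_add 2 n 1, pow_add]; field_simp
      have hχd : χ s * (heatLap w y - cutGaussT n r τ (‖y - x₀‖ ^ 2)) ≤
          M * D * (r ^ (2 * (n + 1)))⁻¹ :=
        (mul_le_mul_of_nonneg_left hdef hχ0).trans
          (mul_le_of_le_one_left (by positivity) hχ1)
      have hsum : f s y * (χ' s * w y + χ s * (heatLap w y - cutGaussT n r τ (‖y - x₀‖ ^ 2))) ≤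
          f s y * B := by
        refine mul_le_mul_of_nonneg_left ?_ hfy
        rw [hB]; linarith
      have hprod : 0 ≤ χ s * w y * (heatLap (f s) y - fderiv ℝ F (s, y) (1, 0)) :=
        mul_nonneg (mul_nonneg hχ0 hw0) (sub_nonneg.2 hf_s)
      have hV'eq : V' s y = χ' s * (f s y * w y) + χ s * (fderiv ℝ F (s, y) (1, 0) * w y -
        f s y * cutGaussT n r τ (‖y - x₀‖ ^ 2)) := rfl
      rw [hV'eq]
      linarith
    calc ∫ y in P, V' s y
        ≤ ∫ y in P, (χ s * (heatLap (f s) y * w y - f s y * heatLap w y) + B * f s y) :=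
          setIntegral_mono_on i3 ((i1.const_mul _).add (i2.const_mul _))
            measurableSet_closedBall hpt
      _ = B * ∫ y in P, f s y := by
          rw [integral_add (i1.const_mul _) (i2.const_mul _), integral_const_mul,
            integral_const_mul, setIntegral_cutGauss_green hu hr x₀, mul_zero, zero_add]
  calc ∫ y in P, cutGauss n r ε (‖y - x₀‖ ^ 2) * f t₀ y
      = ∫ y in P, ∫ s in J, V' s y :=
        setIntegral_congr_fun measurableSet_closedBall fun y hy => (hFTC y hy).symm
    _ = ∫ s in J, ∫ y in P, V' s y := (integral_integral_swap hV'i).symm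
    _ ≤ ∫ s in J, B * ∫ y in P, f s y :=
        setIntegral_mono_on hV'i.integral_prod_left (hFi.integral_prod_left.const_mul B)
          measurableSet_Icc hslab
    _ = B * ∫ z in J ×ˢ P, f z.1 z.2 := by
        rw [integral_const_mul, ← hmeas, integral_prod _ hFi]

/-- **Local `L¹` mean value inequality** for nonnegative subsolutions of the heat equation. -/
lemma exists_heat_mean_value (n : ℕ) : ∃ K : ℝ, 0 < K ∧
    ∀ f : ℝ → EuclideanSpace ℝ (Fin n) → ℝ,
      ContDiffOn ℝ (⊤ : ℕ∞) (fun q : ℝ × EuclideanSpace ℝ (Fin n) => f q.1 q.2)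
        (Ioo (0 : ℝ) 1 ×ˢ univ) →
      (∀ t ∈ Ioo (0 : ℝ) 1, ∀ x, 0 ≤ f t x) →
      (∀ t ∈ Ioo (0 : ℝ) 1, ∀ x, deriv (fun s => f s x) t ≤ heatLap (f t) x) →
      ∀ (t₀ r : ℝ) (x₀ : EuclideanSpace ℝ (Fin n)), 0 < r → r ≤ 1 / 2 → r ^ 2 < t₀ → t₀ < 1 →
        f t₀ x₀ ≤ K * (r ^ (2 * (n + 1)))⁻¹ *
          ∫ z in Icc (t₀ - r ^ 2) t₀ ×ˢ closedBall x₀ r, f z.1 z.2 := by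
  obtain ⟨M, hM, hMb⟩ := exists_lineCutoff_deriv_bound
  refine ⟨M * 2 ^ n + M * ((2 * n + 4) * (8 ^ n * n.factorial) +
    2 * (8 ^ (n + 1) * (n + 1).factorial)), by positivity, ?_⟩
  intro f hf hf0 hsub t₀ r x₀ hr hr2 hrt ht
  have ht0 : t₀ ∈ Ioo (0 : ℝ) 1 := ⟨lt_trans (by positivity) hrt, ht⟩
  have hcont : Continuous (f t₀) := by
    rw [← continuousOn_univ]
    exact hf.continuousOn.comp (f := fun y => (t₀, y)) (by fun_prop) fun y _ => ⟨ht0, trivial⟩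
  set u : EuclideanSpace ℝ (Fin n) → ℝ := fun y => lineCutoff (‖y - x₀‖ ^ 2 / r ^ 2) * f t₀ y
  have hlc := lineCutoff_contDiff.continuous
  have huc : Continuous u := by fun_prop
  have hzero : ∀ y ∉ closedBall x₀ r, lineCutoff (‖y - x₀‖ ^ 2 / r ^ 2) = 0 := fun y hy =>
    (mul_eq_zero.1 (cutGauss_radial_eq_zero n hr 1 hy)).resolve_right (gaussKernel_pos _ _ _).ne'
  have hui : Integrable u := huc.integrable_of_hasCompactSupport
    (HasCompactSupport.intro (isCompact_closedBall x₀ r) fun y hy => by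
      simp only [u, hzero y hy, zero_mul])
  have hlim := tendsto_integral_gaussKernel_mul hui (x₀ := x₀) huc.continuousAt
  have hle := le_of_tendsto hlim (b := _) (by
    filter_upwards [eventually_ge_atTop 2] with c hc
    have h4 : (4 : ℝ) ≤ c ^ 2 := by nlinarith
    have := setIntegral_cutGauss_mul_le hM hMb hf hf0 hsub x₀ hr hr2 hrt ht
      (ε := (c ^ 2)⁻¹) (by positivity) (by
        rw [inv_le_comm₀ (by positivity) (by norm_num)]; linarith)
    rw [setIntegral_eq_integral_of_forall_compl_eq_zero] at this
    · refine le_trans (le_of_eq ?_) this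
      congr 1 with y
      simp only [u, cutGauss]; ring
    · intro y hy
      rw [cutGauss_radial_eq_zero n hr _ hy, zero_mul])
  refine le_trans ?_ hle
  have hux : u x₀ = f t₀ x₀ := by
    simp [u, lineCutoff_of_le_half]
  rw [hux]
  refine le_mul_of_one_le_left (hf0 _ ht0 _) (Real.one_le_rpow ?_ (by positivity))
  linarith [Real.pi_gt_three]

lemma setIntegral_prod_le_of_lintegral_le {n : ℕ} {g : ℝ → EuclideanSpace ℝ (Fin n) → ℝ}
    {J S : Set ℝ} {P T : Set (EuclideanSpace ℝ (Fin n))} (hJ : MeasurableSet J)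
    (hP : MeasurableSet P) (hJS : J ⊆ S) (hPT : P ⊆ T)
    (hg : IntegrableOn (fun z : ℝ × EuclideanSpace ℝ (Fin n) => g z.1 z.2) (J ×ˢ P))
    (hg0 : ∀ z ∈ J ×ˢ P, 0 ≤ g z.1 z.2) {A : ℝ} (hA : 0 ≤ A)
    (h : ∫⁻ t in S, ∫⁻ x in T, ENNReal.ofReal (g t x) ≤ ENNReal.ofReal A) :
    ∫ z in J ×ˢ P, g z.1 z.2 ≤ A := by
  rw [← ENNReal.ofReal_le_ofReal_iff hA, ofReal_integral_eq_lintegral_ofReal hg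
    ((ae_restrict_iff' (hJ.prod hP)).2 (Eventually.of_forall hg0))]
  have hmeas : (volume : Measure (ℝ × EuclideanSpace ℝ (Fin n))).restrict (J ×ˢ P) =
      (volume.restrict J).prod (volume.restrict P) := by
    rw [Measure.prod_restrict, Measure.volume_eq_prod]
  have hm : AEMeasurable (fun z : ℝ × EuclideanSpace ℝ (Fin n) => ENNReal.ofReal (g z.1 z.2))
      ((volume.restrict J).prod (volume.restrict P)) := by
    rw [← hmeas]; exact hg.aemeasurable.ennreal_ofReal
  rw [hmeas, lintegral_prod _ hm]
  refine le_trans ?_ h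
  exact (lintegral_mono fun t => lintegral_mono_set hPT).trans (lintegral_mono_set hJS)

/-- **Local `Lᵖ` mean value inequality**, `0 < p ≤ 1`, deduced from the `L¹` one by maximising
`f` against a power of the distance to the boundary of a cylinder. -/
lemma heat_mul_rpow_le_of_Lp {n : ℕ} {p : ℝ} (hp0 : 0 < p) (hp1 : p ≤ 1) {K : ℝ} (hK : 0 < K)
    {f : ℝ → EuclideanSpace ℝ (Fin n) → ℝ}
    (hf : ContinuousOn (fun q : ℝ × EuclideanSpace ℝ (Fin n) => f q.1 q.2)
      (Ioo (0 : ℝ) 1 ×ˢ univ))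
    (hf0 : ∀ t ∈ Ioo (0 : ℝ) 1, ∀ x, 0 ≤ f t x)
    (hmv : ∀ (t₀ r : ℝ) (x₀ : EuclideanSpace ℝ (Fin n)), 0 < r → r ≤ 1 / 2 → r ^ 2 < t₀ →
      t₀ < 1 → f t₀ x₀ ≤ K * (r ^ (2 * (n + 1)))⁻¹ *
        ∫ z in Icc (t₀ - r ^ 2) t₀ ×ˢ closedBall x₀ r, f z.1 z.2)
    {t₁ : ℝ} (ht : t₁ ∈ Ioo (0 : ℝ) 1) (x₁ : EuclideanSpace ℝ (Fin n)) {A : ℝ} (hA : 0 ≤ A)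
    (hI : ∫⁻ t in Ioc (0 : ℝ) 1, ∫⁻ x in ball (0 : EuclideanSpace ℝ (Fin n)) (‖x₁‖ + 1),
      ENNReal.ofReal (f t x ^ p) ≤ ENNReal.ofReal A) :
    f t₁ x₁ * (t₁ / 2) ^ ((2 * (n + 1) : ℕ) / p) ≤
      (2 ^ ((2 * (n + 1) : ℕ) / p) * K * A) ^ (1 / p) := by
  obtain ⟨ht0, ht1⟩ := ht
  set k : ℕ := 2 * (n + 1)
  set β : ℝ := (k : ℝ) / p
  have hβ : 0 ≤ β := by positivity
  let δ : ℝ × EuclideanSpace ℝ (Fin n) → ℝ := fun z => min (t₁ / 2 - ‖z.2 - x₁‖) (z.1 - t₁ / 2)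
  have hδ : Continuous δ := by fun_prop
  let Q₁ := Icc (t₁ / 2) t₁ ×ˢ closedBall x₁ (t₁ / 2)
  have hQ₁U : Q₁ ⊆ Ioo (0 : ℝ) 1 ×ˢ univ := fun z hz =>
    ⟨⟨by linarith [hz.1.1], by linarith [hz.1.2]⟩, trivial⟩
  have hcmem : (t₁, x₁) ∈ Q₁ := ⟨⟨by linarith, le_rfl⟩, mem_closedBall_self (by linarith)⟩
  obtain ⟨z₀, hz₀, hmax⟩ := (isCompact_Icc.prod (isCompact_closedBall x₁ (t₁ / 2))).exists_isMaxOn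
    ⟨_, hcmem⟩ (f := fun z => f z.1 z.2 * δ z ^ β)
    ((hf.mono hQ₁U).mul (hδ.rpow_const fun _ => Or.inr hβ).continuousOn)
  have hcen : f t₁ x₁ * (t₁ / 2) ^ β ≤ f z₀.1 z₀.2 * δ z₀ ^ β := by
    have h := hmax hcmem
    have e : δ (t₁, x₁) = t₁ / 2 := by simp [δ]; linarith
    simpa [e] using h
  refine hcen.trans ?_
  have hδ0 : 0 ≤ δ z₀ := by
    have := hz₀.2
    rw [mem_closedBall, dist_eq_norm] at this
    exact le_min (by linarith) (by linarith [hz₀.1.1])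
  have hf₀ : 0 ≤ f z₀.1 z₀.2 := hf0 _ (hQ₁U hz₀).1 _
  rcases hδ0.eq_or_lt with hd | hd
  · rw [← hd, Real.zero_rpow (by positivity), mul_zero]; positivity
  rcases hf₀.eq_or_lt with hfz | hfz
  · rw [← hfz, zero_mul]; positivity
  obtain ⟨s₀, y₀⟩ := z₀
  set d := δ (s₀, y₀) with hd_def
  have hd1 : d ≤ t₁ / 2 - ‖y₀ - x₁‖ := min_le_left _ _
  have hd2 : d ≤ s₀ - t₁ / 2 := min_le_right _ _
  have hs₀ : s₀ ≤ t₁ := hz₀.1.2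
  set r := d / 2 with hr_def
  have hr : 0 < r := by positivity
  have hr4 : r ≤ 1 / 4 := by linarith
  have hrr : r ^ 2 ≤ r := by nlinarith
  set J := Icc (s₀ - r ^ 2) s₀
  set P := closedBall y₀ r
  have hin : ∀ z ∈ J ×ˢ P, z ∈ Q₁ ∧ r ≤ δ z := by
    rintro ⟨s, y⟩ ⟨hs, hy⟩
    simp only [J, P, mem_Icc, mem_closedBall, dist_eq_norm] at hs hy
    have htri : ‖y - x₁‖ ≤ ‖y - y₀‖ + ‖y₀ - x₁‖ := norm_sub_le_norm_sub_add_norm_sub _ _ _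
    refine ⟨⟨⟨by dsimp only; linarith, by dsimp only; linarith⟩, ?_⟩, le_min ?_ ?_⟩
    · rw [mem_closedBall, dist_eq_norm]; dsimp only; linarith
    · dsimp only; linarith
    · dsimp only; linarith
  have hfnn : ∀ z ∈ J ×ˢ P, 0 ≤ f z.1 z.2 := fun z hz => hf0 _ (hQ₁U (hin z hz).1).1 _
  set f₀ := f s₀ y₀
  have hdr : d ^ β = 2 ^ β * r ^ β := by
    rw [← Real.mul_rpow (by norm_num) hr.le, hr_def]; ring_nf
  have hfle : ∀ z ∈ J ×ˢ P, f z.1 z.2 ≤ 2 ^ β * f₀ := by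
    intro z hz
    have h1 : f z.1 z.2 * r ^ β ≤ f z.1 z.2 * δ z ^ β :=
      mul_le_mul_of_nonneg_left (Real.rpow_le_rpow hr.le (hin z hz).2 hβ) (hfnn z hz)
    have h2 : f z.1 z.2 * δ z ^ β ≤ f₀ * d ^ β := hmax (hin z hz).1
    have h3 : 0 < r ^ β := by positivity
    refine le_of_mul_le_mul_right ?_ h3
    rw [hdr] at h2
    linarith
  set G : ℝ := 2 ^ β * f₀
  have hG : 0 < G := by positivity
  have hfc : ContinuousOn (fun z : ℝ × EuclideanSpace ℝ (Fin n) => f z.1 z.2) (J ×ˢ P) :=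
    hf.mono fun z hz => hQ₁U (hin z hz).1
  have hQc : IsCompact (J ×ˢ P) := isCompact_Icc.prod (isCompact_closedBall _ _)
  have hfpi : IntegrableOn (fun z : ℝ × EuclideanSpace ℝ (Fin n) => f z.1 z.2 ^ p) (J ×ˢ P) :=
    (hfc.rpow_const fun _ _ => Or.inr hp0.le).integrableOn_compact hQc
  have hIp : ∫ z in J ×ˢ P, f z.1 z.2 ^ p ≤ A := by
    refine setIntegral_prod_le_of_lintegral_le (g := fun t x => f t x ^ p) measurableSet_Icc
      measurableSet_closedBall ?_ ?_ hfpi (fun z hz => Real.rpow_nonneg (hfnn z hz) _) hA hI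
    · intro s hs
      exact ⟨by linarith [hs.1], by linarith [hs.2]⟩
    · intro y hy
      rw [mem_closedBall, dist_eq_norm] at hy
      rw [mem_ball_zero_iff]
      have h1 : ‖y‖ ≤ ‖y - y₀‖ + ‖y₀‖ := by simpa using norm_add_le (y - y₀) y₀
      have h2 : ‖y₀‖ ≤ ‖y₀ - x₁‖ + ‖x₁‖ := by simpa using norm_add_le (y₀ - x₁) x₁
      linarith
  have hint : ∫ z in J ×ˢ P, f z.1 z.2 ≤ G ^ (1 - p) * A := by
    calc ∫ z in J ×ˢ P, f z.1 z.2 ≤ ∫ z in J ×ˢ P, G ^ (1 - p) * f z.1 z.2 ^ p := by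
          refine setIntegral_mono_on (hfc.integrableOn_compact hQc) (hfpi.const_mul _)
            (measurableSet_Icc.prod measurableSet_closedBall) fun z hz => ?_
          have h0 := hfnn z hz
          calc f z.1 z.2 = f z.1 z.2 ^ (1 - p) * f z.1 z.2 ^ p := by
                rw [← Real.rpow_add_of_nonneg h0 (by linarith) hp0.le]; simp
            _ ≤ _ := by
                gcongr
                exact hfle z hz
      _ = G ^ (1 - p) * ∫ z in J ×ˢ P, f z.1 z.2 ^ p := integral_const_mul _ _
      _ ≤ G ^ (1 - p) * A := by gcongr
  have hmv₀ : f₀ ≤ K * (r ^ k)⁻¹ * (G ^ (1 - p) * A) :=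
    (hmv s₀ r y₀ hr (by linarith) (by linarith) (by linarith)).trans (by gcongr)
  have hGp : G ^ p * r ^ k ≤ 2 ^ β * K * A := by
    have h1 : G = G ^ p * G ^ (1 - p) := by rw [← Real.rpow_add hG]; simp
    have h2 : 0 < G ^ (1 - p) := by positivity
    refine le_of_mul_le_mul_right ?_ h2
    calc G ^ p * r ^ k * G ^ (1 - p) = 2 ^ β * f₀ * r ^ k := by rw [mul_right_comm, ← h1]
      _ ≤ 2 ^ β * (K * (r ^ k)⁻¹ * (G ^ (1 - p) * A)) * r ^ k := by gcongr
      _ = 2 ^ β * K * A * G ^ (1 - p) := by field_simp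
  have hkey : (f₀ * d ^ β) ^ p = G ^ p * r ^ k := by
    rw [hdr, ← mul_assoc, mul_comm f₀, Real.mul_rpow hG.le (by positivity), ← Real.rpow_mul hr.le,
      div_mul_cancel₀ _ hp0.ne', Real.rpow_natCast]
  rw [one_div, Real.le_rpow_inv_iff_of_pos (by positivity) (by positivity) hp0, hkey]
  exact hGp

/-- **Pointwise bound from an `Lᵖ` growth bound (Euclidean case).** For `0 < p ≤ 1`
there is `a > 0` depending only on `n` and `p` such that every nonnegative smooth
subsolution of the heat equation on `ℝⁿ × (0,1]` with
`‖f‖_{Lᵖ(B(0,r)×[0,1])} ≤ e^(C r)` for all `r > 0` satisfies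
`f(x,t) ≤ e^(C'(|x|+1)) / tᵃ` for some constant `C' > 0`. -/
theorem heat_pointwise_bound_from_Lp (n : ℕ) (hn : 1 ≤ n) (p : ℝ) (hp0 : 0 < p) (hp1 : p ≤ 1) :
    ∃ a : ℝ, 0 < a ∧
      ∀ (C : ℝ), 0 < C →
      ∀ f : ℝ → EuclideanSpace ℝ (Fin n) → ℝ,
        ContDiffOn ℝ (⊤ : ℕ∞)
          (fun q : ℝ × EuclideanSpace ℝ (Fin n) => f q.1 q.2) (Set.Ioc (0:ℝ) 1 ×ˢ Set.univ) →
        (∀ t ∈ Set.Ioc (0:ℝ) 1, ∀ x, 0 ≤ f t x) →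
        (∀ t ∈ Set.Ioc (0:ℝ) 1, ∀ x, deriv (fun s => f s x) t ≤ heatLap (f t) x) →
        (∀ r > (0:ℝ),
          (∫⁻ t in Set.Ioc (0:ℝ) 1, ∫⁻ x in ball (0 : EuclideanSpace ℝ (Fin n)) r,
            ENNReal.ofReal ((f t x) ^ p)) ^ (1 / p)
          ≤ ENNReal.ofReal (Real.exp (C * r))) →
        ∃ C' : ℝ, 0 < C' ∧ ∀ (x : EuclideanSpace ℝ (Fin n)), ∀ t ∈ Set.Ioc (0:ℝ) 1,
          f t x ≤ Real.exp (C' * (‖x‖ + 1)) / t ^ a := by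
  obtain ⟨K, hK, hmv⟩ := exists_heat_mean_value n
  set β : ℝ := ((2 * (n + 1) : ℕ) : ℝ) / p with hβ_def
  have hβ : 0 < β := by positivity
  refine ⟨β, hβ, fun C hC f hf hf0 hsub hLp => ?_⟩
  have hIU : Ioo (0 : ℝ) 1 ⊆ Ioc 0 1 := Ioo_subset_Ioc_self
  have hf' := hf.mono (prod_mono hIU (subset_refl (univ : Set (EuclideanSpace ℝ (Fin n)))))
  set c : ℝ := 2 ^ β * (2 ^ β * K) ^ (1 / p) with hc_def
  have hc : 0 < c := by positivity
  have hbound : ∀ x, ∀ t ∈ Ioo (0 : ℝ) 1, f t x * t ^ β ≤ c * Real.exp (C * (‖x‖ + 1)) := by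
    intro x t ht
    have hR : 0 < ‖x‖ + 1 := by positivity
    set E := Real.exp (C * (‖x‖ + 1))
    have hE : 0 < E := Real.exp_pos _
    have hI : ∫⁻ t in Ioc (0 : ℝ) 1, ∫⁻ x in ball (0 : EuclideanSpace ℝ (Fin n)) (‖x‖ + 1),
        ENNReal.ofReal (f t x ^ p) ≤ ENNReal.ofReal (E ^ p) := by
      have h := hLp _ hR
      rwa [one_div, ENNReal.rpow_inv_le_iff hp0, ENNReal.ofReal_rpow_of_pos hE] at h
    have h := heat_mul_rpow_le_of_Lp hp0 hp1 hK hf'.continuousOn (fun t ht => hf0 t (hIU ht))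
      (hmv f hf' (fun t ht => hf0 t (hIU ht)) fun t ht => hsub t (hIU ht)) ht x
      (by positivity) hI
    rw [← hβ_def, Real.mul_rpow (by positivity) (by positivity), ← Real.rpow_mul hE.le,
      mul_one_div_cancel hp0.ne', Real.rpow_one, Real.div_rpow ht.1.le (by norm_num),
      ← mul_div_assoc, div_le_iff₀ (by positivity)] at h
    rw [hc_def]
    linarith
  have hbound' : ∀ x, ∀ t ∈ Ioc (0 : ℝ) 1, f t x * t ^ β ≤ c * Real.exp (C * (‖x‖ + 1)) := by
    intro x t ht
    have hcont : ContinuousOn (fun t => f t x * t ^ β) (Ioc 0 1) :=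
      (hf.continuousOn.comp (f := fun t : ℝ => (t, x)) (by fun_prop) fun t ht => ⟨ht, trivial⟩).mul
        (continuousOn_id.rpow_const fun _ _ => Or.inr hβ.le)
    have hcl : t ∈ closure (Ioo (0 : ℝ) 1) := by
      rw [closure_Ioo zero_ne_one]; exact ⟨ht.1.le, ht.2⟩
    have : (nhdsWithin t (Ioo (0 : ℝ) 1)).NeBot := mem_closure_iff_nhdsWithin_neBot.1 hcl
    exact le_of_tendsto ((hcont t ht).mono_left (nhdsWithin_mono t hIU))
      (eventually_nhdsWithin_of_forall (hbound x))
  refine ⟨C + |Real.log c|, by positivity, fun x t ht => ?_⟩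
  rw [le_div_iff₀ (Real.rpow_pos_of_pos ht.1 _)]
  refine (hbound' x t ht).trans ?_
  rw [← Real.exp_log hc, ← Real.exp_add, Real.log_exp]
  refine Real.exp_le_exp.2 ?_
  nlinarith [le_abs_self (Real.log c), mul_nonneg (abs_nonneg (Real.log c)) (norm_nonneg x)]
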